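/- Let H = (V,E) be a proper Eulerian hypergraph. Call H minimal if for every k ≥ 1 and every k-qubit Pauli-based magic assignment ᾱ of H, no two distinct vertices of V are mapped by ᾱ to the same observable, and no vertex is mapped to the identity operator. Call a V×V matrix M over ZMod 2 reduced if M has no zero row and no two identical rows. Then H is minimal if and only if every magic Gram matrix in the valid Gram space of H is reduced. -/

import Mathlib

open Matrix Finset

/-! ### Pauli matrices and observables -/

/-- The Pauli `X` matrix. -/
noncomputable def PX : Matrix (Fin 2) (Fin 2) ℂ := !![0, 1; 1, 0]

/-- The Pauli `Y` matrix. -/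
noncomputable def PY : Matrix (Fin 2) (Fin 2) ℂ := !![0, -Complex.I; Complex.I, 0]

/-- The Pauli `Z` matrix. -/
noncomputable def PZ : Matrix (Fin 2) (Fin 2) ℂ := !![1, 0; 0, -1]

/-- The Kronecker (tensor) product of `k` 2×2 matrices, realized as a matrix indexed by
`Fin k → Fin 2` (a type of cardinality `2^k`). -/
noncomputable def pauliTensor (k : ℕ) (P : Fin k → Matrix (Fin 2) (Fin 2) ℂ) :
    Matrix (Fin k → Fin 2) (Fin k → Fin 2) ℂ :=
  Matrix.of fun f g => ∏ i, P i (f i) (g i)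

/-- A `k`-qubit Pauli observable: `ε · (P₁ ⊗ ⋯ ⊗ P_k)` with `ε ∈ {1,-1}` and each
`P_i ∈ {I, X, Y, Z}`. -/
def IsPauliObservable {k : ℕ} (A : Matrix (Fin k → Fin 2) (Fin k → Fin 2) ℂ) : Prop :=
  ∃ (ε : ℂ) (P : Fin k → Matrix (Fin 2) (Fin 2) ℂ),
    (ε = 1 ∨ ε = -1) ∧ (∀ i, P i = 1 ∨ P i = PX ∨ P i = PY ∨ P i = PZ) ∧
    A = ε • pauliTensor k P

/-! ### Hypergraphs -/

/-- Product of the observables assigned to the vertices of a hyperedge (taken in increasing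
order of the vertices; for commuting observables this is the product in any order). -/
noncomputable def edgeProd {V n : Type*} [LinearOrder V] [Fintype n] [DecidableEq n]
    (α : V → Matrix n n ℂ) (e : Finset V) : Matrix n n ℂ :=
  ((e.sort (· ≤ ·)).map α).prod

/-- A proper Eulerian hypergraph: each vertex lies in an even number of hyperedges, there are
no isolated vertices, no empty hyperedges, and all hyperedges are distinct. -/
def ProperEulerian {V E : Type*} [DecidableEq V] [Fintype E] (edge : E → Finset V) : Prop :=
  (∀ v : V, Even (Finset.univ.filter (fun e : E => v ∈ edge e)).card) ∧
  (∀ v : V, ∃ e : E, v ∈ edge e) ∧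
  (∀ e : E, (edge e).Nonempty) ∧
  Function.Injective edge

/-- A valid Gram matrix for a hypergraph. -/
def IsValidGram {V E : Type*} (edge : E → Finset V) (M : Matrix V V (ZMod 2)) : Prop :=
  M.IsSymm ∧ (∀ v, M v v = 0) ∧
  (∀ e : E, ∀ u ∈ edge e, ∀ v ∈ edge e, M u v = 0) ∧
  (∀ e : E, ∀ v : V, ∑ u ∈ edge e, M u v = 0)

/-- The concatenated list of vertices of the hyperedges, each hyperedge's vertices listed in
increasing order, hyperedges enumerated by the list `le`. -/
def vertexList {V E : Type*} [LinearOrder V] (edge : E → Finset V) (le : List E) : List V :=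
  (le.map fun e => (edge e).sort (· ≤ ·)).flatten

/-- The inversion sum `s(M) = ∑_{i<j, L_i > L_j} M_{L_i, L_j}`. -/
def inversionSum {V : Type*} [LinearOrder V] (M : Matrix V V (ZMod 2)) (L : List V) : ZMod 2 :=
  ∑ i : Fin L.length, ∑ j : Fin L.length,
    if i < j ∧ L.get j < L.get i then M (L.get i) (L.get j) else 0

/-- A magic Gram matrix: a valid Gram matrix with inversion sum 1. -/
def MagicGram {V E : Type*} [LinearOrder V] (edge : E → Finset V) (le : List E)
    (M : Matrix V V (ZMod 2)) : Prop :=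
  IsValidGram edge M ∧ inversionSum M (vertexList edge le) = 1

/-- A `k`-qubit Pauli-based magic assignment of a hypergraph. -/
def IsPauliMagicAssignment {V E : Type*} [LinearOrder V] [Fintype E] (k : ℕ)
    (edge : E → Finset V) (α : V → Matrix (Fin k → Fin 2) (Fin k → Fin 2) ℂ) : Prop :=
  (∀ v, IsPauliObservable (α v)) ∧
  (∀ e : E, ∀ u ∈ edge e, ∀ w ∈ edge e, Commute (α u) (α w)) ∧
  (∀ e : E, edgeProd α (edge e) = 1 ∨ edgeProd α (edge e) = -1) ∧
  Odd (Nat.card {e : E // edgeProd α (edge e) = -1})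

/-- A magic assignment of a hypergraph by Hermitian matrices squaring to the identity. -/
def IsMagicAssignment {V E n : Type*} [LinearOrder V] [Fintype E] [Fintype n] [DecidableEq n]
    (edge : E → Finset V) (α : V → Matrix n n ℂ) : Prop :=
  (∀ v, (α v).IsHermitian) ∧ (∀ v, α v * α v = 1) ∧
  (∀ e : E, ∀ u ∈ edge e, ∀ w ∈ edge e, Commute (α u) (α w)) ∧
  (∀ e : E, edgeProd α (edge e) = 1 ∨ edgeProd α (edge e) = -1) ∧
  Odd (Nat.card {e : E // edgeProd α (edge e) = -1})

open scoped Classical in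
/-- The sign vector `c(α) ∈ (ZMod 2)^E` of an assignment: `0` on hyperedges with product `+I`,
`1` on the others. -/
noncomputable def cvec {V E n : Type*} [LinearOrder V] [Fintype E] [Fintype n] [DecidableEq n]
    (edge : E → Finset V) (α : V → Matrix n n ℂ) : E → ZMod 2 :=
  fun e => if edgeProd α (edge e) = 1 then 0 else 1

/-- The incidence matrix of a hypergraph. -/
def incMatrix {V E : Type*} [DecidableEq V] (edge : E → Finset V) : Matrix V E (ZMod 2) :=
  Matrix.of fun v e => if v ∈ edge e then 1 else 0

/-- Hamming weight of a vector over `ZMod 2`. -/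
def hWeight {E : Type*} [Fintype E] (y : E → ZMod 2) : ℕ :=
  (Finset.univ.filter fun e => y e ≠ 0).card

/-- The symplectic product on `(ZMod 2)^{2k}` (coordinates indexed by `Fin k ⊕ Fin k`). -/
def sympl (k : ℕ) (s t : Fin k ⊕ Fin k → ZMod 2) : ZMod 2 :=
  ∑ i : Fin k, (s (Sum.inl i) * t (Sum.inr i) + s (Sum.inr i) * t (Sum.inl i))

/-!
Two Pauli observables commute up to the sign `(-1) ^ ω`, where `ω` is the symplectic product of
their coordinates. The Gram matrix of an assignment collects these exponents. If every hyperedge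
has product `±1`, each observable commutes with these products, so the rows of the Gram matrix sum
to zero over each hyperedge. Multiplying all hyperedge products together and sorting the resulting
word, in which every vertex occurs evenly often, leaves `(-1) ^ s(M)`; hence the number of negative
hyperedges is odd exactly when `s(M) = 1`.

Conversely, an alternating matrix `M` is the Gram matrix of vectors that depend linearly on its
rows, so the corresponding Pauli operators send equal rows to equal observables and the zero row to
the identity. In the other direction equal observables have equal rows because an entry of the Gram
matrix only depends on whether the two observables commute.
-/

section Lists

theorem list_prod_pow_eq_one {M : Type*} [Monoid M] {n : ℕ} {l : List M}
    (hpow : ∀ a ∈ l, a ^ n = 1) (hcomm : ∀ a ∈ l, ∀ b ∈ l, Commute a b) : l.prod ^ n = 1 := by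
  induction l with
  | nil => simp
  | cons a l ih =>
    have ha : Commute a l.prod :=
      Commute.list_prod_right _ _ fun b hb => hcomm a (by simp) b (by simp [hb])
    have hl : l.prod ^ n = 1 :=
      ih (fun b hb => hpow b (by simp [hb])) fun b hb c hc =>
        hcomm b (by simp [hb]) c (by simp [hc])
    rw [List.prod_cons, ha.mul_pow, hpow a (by simp), hl, one_mul]

theorem list_prod_eq_neg_one_pow_count {R : Type*} [Ring R] [NeZero (2 : R)] [DecidableEq R]
    {l : List R} (hl : ∀ a ∈ l, a = 1 ∨ a = -1) : l.prod = (-1) ^ l.count (-1) := by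
  have one_ne_neg_one : (1 : R) ≠ -1 := fun h =>
    two_ne_zero (α := R) (by rw [← one_add_one_eq_two]; exact eq_neg_iff_add_eq_zero.mp h)
  induction l with
  | nil => simp
  | cons a l ih =>
    rw [List.prod_cons, ih fun b hb => hl b (by simp [hb])]
    rcases hl a (by simp) with rfl | rfl
    · rw [one_mul, List.count_cons_of_ne one_ne_neg_one]
    · rw [List.count_cons_self, pow_succ']

theorem sum_map_eq_finset_sum {ι A : Type*} [AddCommMonoid A] {l : List ι} {s : Finset ι}
    (hl : l.Nodup) (hs : ∀ i, i ∈ l ↔ i ∈ s) (f : ι → A) : (l.map f).sum = ∑ i ∈ s, f i := by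
  classical
  rw [← List.sum_toFinset f hl]
  congr 1
  ext i
  simp [hs]

theorem sum_map_sort {V A : Type*} [LinearOrder V] [AddCommMonoid A] (s : Finset V) (f : V → A) :
    ((s.sort (· ≤ ·)).map f).sum = ∑ v ∈ s, f v :=
  sum_map_eq_finset_sum (s.sort_nodup _) (fun _ => s.mem_sort _) f

theorem count_map_eq_natCard {ι β : Type*} [DecidableEq β] {l : List ι}
    (hl : l.Nodup) (hmem : ∀ i, i ∈ l) (f : ι → β) (b : β) :
    (l.map f).count b = Nat.card {i // f i = b} := by
  classical
  have : Fintype ι := Fintype.ofList l hmem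
  rw [List.count, List.countP_map, List.countP_eq_length_filter,
    ← List.toFinset_card_of_nodup (hl.filter _), Nat.card_eq_fintype_card, Fintype.card_subtype]
  congr 1
  ext i
  simp [hmem]

end Lists

section Signs

theorem zmod_two_eq_zero_or_one (x : ZMod 2) : x = 0 ∨ x = 1 := by
  decide +revert

theorem uzpow_sum {ι R : Type*} [CommSemiring R] [Module R (Additive ℤˣ)] (s : Finset ι)
    (f : ι → R) (u : ℤˣ) : u ^ (∑ i ∈ s, f i) = ∏ i ∈ s, u ^ f i :=
  congrArg Additive.toMul (Finset.sum_smul (f := f) (s := s) (x := Additive.ofMul u))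

theorem neg_one_uzpow_smul_eq_self_iff {R : Type*} [Ring R] [NeZero (2 : R)] {b : R}
    (hb : IsUnit b) (x : ZMod 2) : (-1 : ℤˣ) ^ x • b = b ↔ x = 0 := by
  have hneg : -b ≠ b := fun h => two_ne_zero (α := R) <| hb.mul_left_eq_zero.mp <| by
    rw [two_mul, ← eq_neg_iff_add_eq_zero, h]
  obtain rfl | rfl := zmod_two_eq_zero_or_one x
  · simp
  · simp [hneg]

theorem neg_one_uzpow_smul_one_inj {R : Type*} [Ring R] [NeZero (2 : R)] {x y : ZMod 2} :
    (-1 : ℤˣ) ^ x • (1 : R) = (-1 : ℤˣ) ^ y • (1 : R) ↔ x = y := by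
  rw [← inv_smul_eq_iff, smul_smul, ← uzpow_neg, ← uzpow_add,
    neg_one_uzpow_smul_eq_self_iff isUnit_one, neg_add_eq_zero, eq_comm]

instance neZero_two_matrix {n R : Type*} [DecidableEq n] [Nonempty n] [AddMonoidWithOne R]
    [NeZero (2 : R)] : NeZero (2 : Matrix n n R) where
  out h := two_ne_zero (α := R) <| by
    let i := Classical.arbitrary n
    simpa [← one_add_one_eq_two] using congrFun (congrFun h i) i

end Signs

/-- `M` is the Gram matrix of the family `α`: the entry `M u v` records whether `α u` and `α v`
commute (`0`) or anticommute (`1`). -/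
def HasGram {V R : Type*} [Ring R] (α : V → R) (M : Matrix V V (ZMod 2)) : Prop :=
  ∀ u v, α u * α v = (-1 : ℤˣ) ^ M u v • (α v * α u)

/-- The contribution to the inversion sum of a letter `a` preceding the word `L`. -/
def headInversionSum {V : Type*} [LinearOrder V] (M : Matrix V V (ZMod 2)) (a : V)
    (L : List V) : ZMod 2 :=
  (L.map fun b => if b < a then M a b else 0).sum

section InversionSum

variable {V : Type*} [LinearOrder V] (M : Matrix V V (ZMod 2))

theorem inversionSum_cons (a : V) (L : List V) :
    inversionSum M (a :: L) = headInversionSum M a L + inversionSum M L := by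
  unfold inversionSum headInversionSum
  change (∑ i : Fin (L.length + 1), ∑ j : Fin (L.length + 1), _) = _
  rw [Fin.sum_univ_succ]
  congr 1
  · rw [Fin.sum_univ_succ, ← Fin.sum_univ_fun_getElem]
    simp [Fin.succ_pos]
  · refine Finset.sum_congr rfl fun i _ => ?_
    rw [Fin.sum_univ_succ]
    simp

theorem headInversionSum_eq_zero {a : V} {L : List V} (h : ∀ b ∈ L, a ≤ b) :
    headInversionSum M a L = 0 := by
  refine List.sum_eq_zero fun x hx => ?_
  obtain ⟨b, hb, rfl⟩ := List.mem_map.mp hx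
  exact if_neg (h b hb).not_gt

theorem headInversionSum_congr_perm (a : V) {L L' : List V} (h : L.Perm L') :
    headInversionSum M a L = headInversionSum M a L' :=
  (h.map _).sum_eq

end InversionSum

theorem sorted_prod_eq_one_of_even_count {V R : Type*} [LinearOrder V] [Monoid R] {α : V → R}
    (hsq : ∀ v, α v * α v = 1) :
    ∀ {l : List V}, l.Pairwise (· ≤ ·) → (∀ v, Even (l.count v)) → (l.map α).prod = 1
  | [], _, _ => rfl
  | [a], _, heven => by simpa using heven a
  | a :: b :: l, hsort, heven => by
    obtain ⟨ha, hb, hl⟩ : (∀ c ∈ b :: l, a ≤ c) ∧ (∀ c ∈ l, b ≤ c) ∧ l.Pairwise (· ≤ ·) := by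
      simpa only [List.pairwise_cons] using hsort
    obtain rfl : a = b := by
      by_contra hne
      have hcount : Even (l.count a + 1) := by
        simpa [List.count_cons_of_ne (Ne.symm hne)] using heven a
      have hmem : a ∈ l := List.count_pos_iff.mp <| Nat.pos_of_ne_zero fun h => by
        simp [h] at hcount
      exact hne (le_antisymm (ha b (by simp)) (hb a hmem))
    have heven' (v : V) : Even (l.count v) := by
      have := heven v
      rw [List.count_cons, List.count_cons, add_assoc, Nat.even_add] at this
      exact this.mpr ⟨_, rfl⟩
    rw [List.map_cons, List.map_cons, List.prod_cons, List.prod_cons, ← mul_assoc, hsq, one_mul,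
      sorted_prod_eq_one_of_even_count hsq hl heven']

namespace HasGram

section Ring

variable {V R : Type*} [Ring R] {α : V → R} {M : Matrix V V (ZMod 2)}

theorem eq_zero_iff_commute [NeZero (2 : R)] (h : HasGram α M) (hα : ∀ v, IsUnit (α v))
    (u v : V) : M u v = 0 ↔ Commute (α u) (α v) := by
  rw [← neg_one_uzpow_smul_eq_self_iff ((hα v).mul (hα u)), ← h u v, commute_iff_eq]

theorem apply_eq_apply [NeZero (2 : R)] (h : HasGram α M) (hα : ∀ v, IsUnit (α v))
    {u v u' v' : V} (hcomm : Commute (α u) (α v) ↔ Commute (α u') (α v')) :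
    M u v = M u' v' := by
  have eq_of_zero_iff : ∀ x y : ZMod 2, (x = 0 ↔ y = 0) → x = y := by decide
  apply eq_of_zero_iff
  rw [h.eq_zero_iff_commute hα, h.eq_zero_iff_commute hα, hcomm]

theorem list_prod_mul (h : HasGram α M) (L : List V) (v : V) :
    (L.map α).prod * α v = (-1 : ℤˣ) ^ (L.map (M · v)).sum • (α v * (L.map α).prod) := by
  induction L with
  | nil => simp
  | cons a L ih =>
    simp only [List.map_cons, List.prod_cons, List.sum_cons]
    rw [mul_assoc, ih, mul_smul_comm, ← mul_assoc, h, smul_mul_assoc, smul_smul, ← uzpow_add,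
      mul_assoc, add_comm]

variable [LinearOrder V]

theorem mul_prod_eq_orderedInsert_prod (h : HasGram α M) (a : V) {l : List V}
    (hl : l.Pairwise (· ≤ ·)) :
    α a * (l.map α).prod =
      (-1 : ℤˣ) ^ headInversionSum M a l • ((l.orderedInsert (· ≤ ·) a).map α).prod := by
  induction l with
  | nil => simp [headInversionSum]
  | cons b l ih =>
    obtain ⟨hb, hl⟩ := List.pairwise_cons.mp hl
    by_cases hab : a ≤ b
    · have hle : ∀ c ∈ b :: l, a ≤ c := by
        simpa [hab] using fun c hc => hab.trans (hb c hc)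
      simp [headInversionSum_eq_zero M hle, hab]
    · have hhead : headInversionSum M a (b :: l) = M a b + headInversionSum M a l := by
        simp [headInversionSum, not_le.mp hab]
      rw [hhead, List.orderedInsert_cons, if_neg hab, List.map_cons, List.map_cons, List.prod_cons,
        List.prod_cons, ← mul_assoc, h, smul_mul_assoc, mul_assoc, ih hl, mul_smul_comm, smul_smul,
        uzpow_add]

theorem prod_eq_insertionSort_prod (h : HasGram α M) (L : List V) :
    (L.map α).prod = (-1 : ℤˣ) ^ inversionSum M L • ((L.insertionSort (· ≤ ·)).map α).prod := by
  induction L with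
  | nil => simp [inversionSum]
  | cons a L ih =>
    rw [List.map_cons, List.prod_cons, ih, mul_smul_comm,
      h.mul_prod_eq_orderedInsert_prod a (List.pairwise_insertionSort _ L),
      headInversionSum_congr_perm M a (List.perm_insertionSort _ L), smul_smul, ← uzpow_add,
      inversionSum_cons, add_comm, List.insertionSort_cons]

theorem prod_eq_smul_one_of_even_count (h : HasGram α M) (hsq : ∀ v, α v * α v = 1) {L : List V}
    (heven : ∀ v, Even (L.count v)) :
    (L.map α).prod = (-1 : ℤˣ) ^ inversionSum M L • (1 : R) := by
  rw [h.prod_eq_insertionSort_prod, sorted_prod_eq_one_of_even_count hsq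
    (List.pairwise_insertionSort _ L) fun v => ?_]
  rw [(List.perm_insertionSort _ L).count_eq]
  exact heven v

end Ring

end HasGram

section Hypergraph

variable {V E n : Type*} [LinearOrder V] [Fintype n] [DecidableEq n] {edge : E → Finset V}

theorem even_count_vertexList [Fintype E] {le : List E} (hnd : le.Nodup) (hmem : ∀ e, e ∈ le)
    {v : V} (heven : Even #{e | v ∈ edge e}) : Even ((vertexList edge le).count v) := by
  rw [vertexList, List.count_flatten, List.map_map,
    sum_map_eq_finset_sum hnd (s := Finset.univ) (by simpa using hmem)]
  simpa [List.Nodup.count (Finset.sort_nodup _ _)] using heven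

theorem prod_map_vertexList (α : V → Matrix n n ℂ) (le : List E) :
    ((vertexList edge le).map α).prod = (le.map fun e => edgeProd α (edge e)).prod := by
  rw [vertexList, List.map_flatten, List.prod_flatten, List.map_map, List.map_map]
  rfl

theorem edgeProd_eq_one_or_neg_one {α : V → Matrix n n ℂ} {s : Finset V} {t : ℂ}
    (hsq : ∀ v ∈ s, α v * α v = 1) (hcomm : ∀ u ∈ s, ∀ v ∈ s, Commute (α u) (α v))
    (hscalar : edgeProd α s = t • 1) : edgeProd α s = 1 ∨ edgeProd α s = -1 := by
  cases isEmpty_or_nonempty n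
  · exact Or.inl (Subsingleton.elim _ _)
  have hone : edgeProd α s ^ 2 = 1 := by
    refine list_prod_pow_eq_one ?_ ?_
    · simpa [pow_two] using hsq
    · simpa using hcomm
  have ht : t * t = 1 := by
    rw [hscalar, smul_pow, one_pow, pow_two] at hone
    exact smul_left_injective ℂ (one_ne_zero (α := Matrix n n ℂ)) (by simpa using hone)
  rcases mul_self_eq_one_iff.mp ht with rfl | rfl
  · exact Or.inl (by simpa using hscalar)
  · exact Or.inr (by simpa using hscalar)

namespace HasGram

variable {α : V → Matrix n n ℂ} {M : Matrix V V (ZMod 2)}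

theorem edgeProd_mul (h : HasGram α M) (s : Finset V) (v : V) :
    edgeProd α s * α v = (-1 : ℤˣ) ^ (∑ u ∈ s, M u v) • (α v * edgeProd α s) := by
  rw [← sum_map_sort]
  exact h.list_prod_mul _ v

variable [Nonempty n]

theorem isValidGram (h : HasGram α M) (hα : ∀ v, IsUnit (α v))
    (hcomm : ∀ e, ∀ u ∈ edge e, ∀ v ∈ edge e, Commute (α u) (α v))
    (hprod : ∀ e, edgeProd α (edge e) = 1 ∨ edgeProd α (edge e) = -1) :
    IsValidGram edge M := by
  refine ⟨Matrix.IsSymm.ext fun u v => h.apply_eq_apply hα ⟨.symm, .symm⟩,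
    fun v => (h.eq_zero_iff_commute hα v v).mpr (.refl _),
    fun e u hu v hv => (h.eq_zero_iff_commute hα u v).mpr (hcomm e u hu v hv), fun e v => ?_⟩
  have hunit : IsUnit (edgeProd α (edge e)) := by
    rcases hprod e with he | he <;> simp [he]
  have hcentral : edgeProd α (edge e) * α v = α v * edgeProd α (edge e) := by
    rcases hprod e with he | he <;> simp [he]
  rw [← neg_one_uzpow_smul_eq_self_iff ((hα v).mul hunit), ← h.edgeProd_mul, hcentral]

theorem natCast_card_edgeProd_eq_neg_one [Fintype E] (h : HasGram α M)
    (hsq : ∀ v, α v * α v = 1) (heven : ∀ v, Even #{e | v ∈ edge e})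
    (hprod : ∀ e, edgeProd α (edge e) = 1 ∨ edgeProd α (edge e) = -1)
    {le : List E} (hnd : le.Nodup) (hmem : ∀ e, e ∈ le) :
    (Nat.card {e // edgeProd α (edge e) = -1} : ZMod 2) =
      inversionSum M (vertexList edge le) := by
  classical
  rw [← neg_one_uzpow_smul_one_inj (R := Matrix n n ℂ),
    ← h.prod_eq_smul_one_of_even_count hsq fun v => even_count_vertexList hnd hmem (heven v),
    prod_map_vertexList, list_prod_eq_neg_one_pow_count (by simpa using fun e _ => hprod e),
    count_map_eq_natCard hnd hmem, uzpow_natCast]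
  simp [Units.smul_def]

end HasGram

end Hypergraph

section Pauli

/-- The one-qubit Pauli matrix with symplectic coordinates `(a, b)`, i.e. `X ^ a * Z ^ b` up to
phase. -/
noncomputable def pauliMatrix (a b : ZMod 2) : Matrix (Fin 2) (Fin 2) ℂ :=
  if a = 0 then (if b = 0 then 1 else PZ) else (if b = 0 then PX else PY)

theorem exists_pauliMatrix_eq_iff {P : Matrix (Fin 2) (Fin 2) ℂ} :
    (∃ a b, pauliMatrix a b = P) ↔ P = 1 ∨ P = PX ∨ P = PY ∨ P = PZ := by
  constructor
  · rintro ⟨a, b, rfl⟩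
    unfold pauliMatrix
    split_ifs <;> simp
  · rintro (rfl | rfl | rfl | rfl)
    exacts [⟨0, 0, by simp [pauliMatrix]⟩, ⟨1, 0, by simp [pauliMatrix]⟩,
      ⟨1, 1, by simp [pauliMatrix]⟩, ⟨0, 1, by simp [pauliMatrix]⟩]

theorem PX_mul_PX : PX * PX = 1 := by simp [PX, Matrix.one_fin_two]

theorem PY_mul_PY : PY * PY = 1 := by simp [PY, Matrix.one_fin_two]

theorem PZ_mul_PZ : PZ * PZ = 1 := by simp [PZ, Matrix.one_fin_two]

theorem PX_mul_PY : PX * PY = Complex.I • PZ := by simp [PX, PY, PZ]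

theorem PY_mul_PX : PY * PX = -Complex.I • PZ := by simp [PX, PY, PZ]

theorem PY_mul_PZ : PY * PZ = Complex.I • PX := by simp [PX, PY, PZ]

theorem PZ_mul_PY : PZ * PY = -Complex.I • PX := by simp [PX, PY, PZ]

theorem PZ_mul_PX : PZ * PX = Complex.I • PY := by simp [PX, PY, PZ]

theorem PX_mul_PZ : PX * PZ = -Complex.I • PY := by simp [PX, PY, PZ]

theorem pauliMatrix_mul_self (a b : ZMod 2) : pauliMatrix a b * pauliMatrix a b = 1 := by
  unfold pauliMatrix
  split_ifs <;> simp [PX_mul_PX, PY_mul_PY, PZ_mul_PZ]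

theorem pauliMatrix_mul_comm (a b c d : ZMod 2) :
    pauliMatrix a b * pauliMatrix c d =
      (-1 : ℤˣ) ^ (a * d + b * c) • (pauliMatrix c d * pauliMatrix a b) := by
  rcases zmod_two_eq_zero_or_one a with rfl | rfl <;>
    rcases zmod_two_eq_zero_or_one b with rfl | rfl <;>
    rcases zmod_two_eq_zero_or_one c with rfl | rfl <;>
    rcases zmod_two_eq_zero_or_one d with rfl | rfl <;>
    simp [pauliMatrix, CharTwo.add_self_eq_zero, PX_mul_PY, PY_mul_PX, PY_mul_PZ, PZ_mul_PY,
      PZ_mul_PX, PX_mul_PZ]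

theorem exists_pauliMatrix_mul_eq_smul (a b c d : ZMod 2) :
    ∃ t : ℂ, pauliMatrix a b * pauliMatrix c d = t • pauliMatrix (a + c) (b + d) := by
  rcases zmod_two_eq_zero_or_one a with rfl | rfl <;>
    rcases zmod_two_eq_zero_or_one b with rfl | rfl <;>
    rcases zmod_two_eq_zero_or_one c with rfl | rfl <;>
    rcases zmod_two_eq_zero_or_one d with rfl | rfl <;>
    simp only [pauliMatrix, CharTwo.add_self_eq_zero, add_zero, zero_add, one_ne_zero, if_true,
      if_false, one_mul, mul_one, PX_mul_PX, PY_mul_PY, PZ_mul_PZ, PX_mul_PY, PY_mul_PX,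
      PY_mul_PZ, PZ_mul_PY, PZ_mul_PX, PX_mul_PZ] <;>
    first
    | exact ⟨_, rfl⟩
    | exact ⟨1, (one_smul ℂ _).symm⟩

theorem pauliTensor_mul (k : ℕ) (P Q : Fin k → Matrix (Fin 2) (Fin 2) ℂ) :
    pauliTensor k P * pauliTensor k Q = pauliTensor k fun i => P i * Q i := by
  ext f g
  simp only [pauliTensor, Matrix.mul_apply, Matrix.of_apply, Finset.prod_univ_sum,
    Fintype.piFinset_univ, Finset.prod_mul_distrib]

theorem pauliTensor_smul {S : Type*} [CommMonoid S] [MulAction S ℂ] [IsScalarTower S ℂ ℂ]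
    [SMulCommClass S ℂ ℂ] (k : ℕ) (c : Fin k → S) (P : Fin k → Matrix (Fin 2) (Fin 2) ℂ) :
    pauliTensor k (fun i => c i • P i) = (∏ i, c i) • pauliTensor k P := by
  ext f g
  simp [pauliTensor, Finset.prod_smul]

theorem pauliTensor_one (k : ℕ) : pauliTensor k (fun _ => 1) = 1 := by
  ext f g
  simp only [pauliTensor, Matrix.of_apply, Matrix.one_apply, Finset.prod_ite_zero,
    Finset.prod_const_one, funext_iff, Finset.mem_univ, true_imp_iff]

/-- The `k`-qubit Pauli operator with symplectic coordinates `s`: its `X`-part is `s ∘ Sum.inl` and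
its `Z`-part is `s ∘ Sum.inr`. -/
noncomputable def pauliOp (k : ℕ) (s : Fin k ⊕ Fin k → ZMod 2) :
    Matrix (Fin k → Fin 2) (Fin k → Fin 2) ℂ :=
  pauliTensor k fun i => pauliMatrix (s (Sum.inl i)) (s (Sum.inr i))

variable {k : ℕ}

theorem pauliOp_zero : pauliOp k 0 = 1 := by
  simp [pauliOp, pauliMatrix, pauliTensor_one]

theorem pauliOp_mul_self (s : Fin k ⊕ Fin k → ZMod 2) : pauliOp k s * pauliOp k s = 1 := by
  simp only [pauliOp, pauliTensor_mul, pauliMatrix_mul_self, pauliTensor_one]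

theorem pauliOp_mul_comm (s t : Fin k ⊕ Fin k → ZMod 2) :
    pauliOp k s * pauliOp k t = (-1 : ℤˣ) ^ sympl k s t • (pauliOp k t * pauliOp k s) := by
  simp only [pauliOp, pauliTensor_mul, sympl, uzpow_sum, ← pauliTensor_smul,
    ← pauliMatrix_mul_comm]

theorem exists_pauliOp_mul_eq_smul (s t : Fin k ⊕ Fin k → ZMod 2) :
    ∃ c : ℂ, pauliOp k s * pauliOp k t = c • pauliOp k (s + t) := by
  choose c hc using fun i =>
    exists_pauliMatrix_mul_eq_smul (s (Sum.inl i)) (s (Sum.inr i)) (t (Sum.inl i)) (t (Sum.inr i))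
  exact ⟨∏ i, c i, by simp only [pauliOp, pauliTensor_mul, hc, pauliTensor_smul, Pi.add_apply]⟩

theorem exists_pauliOp_list_prod_eq_smul (L : List (Fin k ⊕ Fin k → ZMod 2)) :
    ∃ c : ℂ, (L.map (pauliOp k)).prod = c • pauliOp k L.sum := by
  induction L with
  | nil => exact ⟨1, by simp [pauliOp_zero]⟩
  | cons s L ih =>
    obtain ⟨c, hc⟩ := ih
    obtain ⟨d, hd⟩ := exists_pauliOp_mul_eq_smul s L.sum
    exact ⟨c * d, by rw [List.map_cons, List.prod_cons, List.sum_cons, hc, mul_smul_comm, hd,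
      smul_smul]⟩

theorem isPauliObservable_iff {A : Matrix (Fin k → Fin 2) (Fin k → Fin 2) ℂ} :
    IsPauliObservable A ↔ ∃ (ε : ℤˣ) (s : Fin k ⊕ Fin k → ZMod 2), A = ε • pauliOp k s := by
  constructor
  · rintro ⟨ε, P, hε, hP, rfl⟩
    choose a b hab using fun i => exists_pauliMatrix_eq_iff.mpr (hP i)
    have htensor : pauliTensor k P = pauliOp k (Sum.elim a b) := by simp [pauliOp, hab]
    rcases hε with rfl | rfl
    · exact ⟨1, Sum.elim a b, by simp [htensor]⟩
    · exact ⟨-1, Sum.elim a b, by simp [htensor]⟩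
  · rintro ⟨ε, s, rfl⟩
    refine ⟨((ε : ℤ) : ℂ), fun i => pauliMatrix (s (Sum.inl i)) (s (Sum.inr i)), ?_,
      fun i => exists_pauliMatrix_eq_iff.mp ⟨_, _, rfl⟩, ?_⟩
    · rcases Int.units_eq_one_or ε with rfl | rfl <;> simp
    · exact (Int.cast_smul_eq_zsmul ℂ _ _).symm

theorem IsPauliObservable.mul_self {A : Matrix (Fin k → Fin 2) (Fin k → Fin 2) ℂ}
    (hA : IsPauliObservable A) : A * A = 1 := by
  obtain ⟨ε, s, rfl⟩ := isPauliObservable_iff.mp hA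
  rw [smul_mul_smul_comm, Int.units_mul_self, one_smul, pauliOp_mul_self]

theorem exists_hasGram_of_isPauliObservable {V : Type*}
    {α : V → Matrix (Fin k → Fin 2) (Fin k → Fin 2) ℂ} (hα : ∀ v, IsPauliObservable (α v)) :
    ∃ M, HasGram α M := by
  choose ε s hεs using fun v => isPauliObservable_iff.mp (hα v)
  refine ⟨Matrix.of fun u v => sympl k (s u) (s v), fun u v => ?_⟩
  rw [hεs u, hεs v, smul_mul_smul_comm, smul_mul_smul_comm, pauliOp_mul_comm, smul_comm,
    mul_comm (ε u), Matrix.of_apply]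

theorem exists_edgeProd_pauliOp_eq_smul {V : Type*} [LinearOrder V]
    (s : V → Fin k ⊕ Fin k → ZMod 2) (e : Finset V) :
    ∃ c : ℂ, edgeProd (fun v => pauliOp k (s v)) e = c • pauliOp k (∑ v ∈ e, s v) := by
  obtain ⟨c, hc⟩ := exists_pauliOp_list_prod_eq_smul ((e.sort (· ≤ ·)).map s)
  exact ⟨c, by rw [← sum_map_sort, ← hc, List.map_map]; rfl⟩

end Pauli

section SymplecticRealization

theorem exists_comp_comp_eq_self {K F G : Type*} [DivisionRing K] [AddCommGroup F] [Module K F]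
    [AddCommGroup G] [Module K G] (f : F →ₗ[K] G) : ∃ g : G →ₗ[K] F, f ∘ₗ g ∘ₗ f = f := by
  obtain ⟨g₀, hg₀⟩ := f.rangeRestrict.exists_rightInverse_of_surjective f.range_rangeRestrict
  obtain ⟨g, hg⟩ := LinearMap.exists_extend g₀
  refine ⟨g, LinearMap.ext fun x => ?_⟩
  have hgx : g (f x) = g₀ (f.rangeRestrict x) := LinearMap.congr_fun hg (f.rangeRestrict x)
  rw [LinearMap.comp_apply, LinearMap.comp_apply, hgx]
  exact congrArg Subtype.val (LinearMap.congr_fun hg₀ (f.rangeRestrict x))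

theorem exists_eq_sub_transpose {V A : Type*} [LinearOrder V] [AddGroup A] {M : Matrix V V A}
    (hskew : Mᵀ = -M) (hdiag : ∀ v, M v v = 0) : ∃ B : Matrix V V A, M = B - Bᵀ := by
  refine ⟨Matrix.of fun u v => if u < v then M u v else 0, ?_⟩
  ext u v
  have hvu : M v u = -M u v := congrFun (congrFun hskew u) v
  rcases lt_trichotomy u v with h | rfl | h
  · simp [h, h.not_gt]
  · simp [hdiag]
  · simp [h, h.not_gt, hvu]

theorem exists_linearMap_dotProduct_sub_eq {V K : Type*} [Fintype V] [LinearOrder V] [Field K]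
    {M : Matrix V V K} (hskew : Mᵀ = -M) (hdiag : ∀ v, M v v = 0) :
    ∃ X Z : (V → K) →ₗ[K] (V → K), ∀ u v,
      X (M.row u) ⬝ᵥ Z (M.row v) - Z (M.row u) ⬝ᵥ X (M.row v) = M u v := by
  obtain ⟨B, hB⟩ := exists_eq_sub_transpose hskew hdiag
  obtain ⟨g, hg⟩ := exists_comp_comp_eq_self M.mulVecLin
  have hrow (u : V) : M *ᵥ g (M.row u) = M.row u := by
    have hu : M.row u = M *ᵥ -Pi.single u 1 := by
      rw [Matrix.mulVec_neg, ← Matrix.neg_mulVec, ← hskew, Matrix.mulVec_single_one]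
      rfl
    rw [hu]
    exact LinearMap.congr_fun hg _
  refine ⟨g, B.mulVecLin ∘ₗ g, fun u v => ?_⟩
  calc g (M.row u) ⬝ᵥ B *ᵥ g (M.row v) - (B *ᵥ g (M.row u)) ⬝ᵥ g (M.row v)
      = g (M.row u) ⬝ᵥ (B - Bᵀ) *ᵥ g (M.row v) := by
        rw [Matrix.sub_mulVec, dotProduct_sub, Matrix.dotProduct_mulVec _ Bᵀ,
          Matrix.vecMul_transpose]
    _ = M.row v ⬝ᵥ g (M.row u) := by rw [← hB, hrow, dotProduct_comm]
    _ = M u v := congrFun (hrow u) v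

theorem exists_linearMap_sympl_eq {V : Type*} [Fintype V] [LinearOrder V]
    {M : Matrix V V (ZMod 2)} (hsymm : M.IsSymm) (hdiag : ∀ v, M v v = 0) :
    ∃ Φ : (V → ZMod 2) →ₗ[ZMod 2] (Fin (Fintype.card V) ⊕ Fin (Fintype.card V) → ZMod 2),
      ∀ u v, sympl _ (Φ (M.row u)) (Φ (M.row v)) = M u v := by
  have hskew : Mᵀ = -M := by
    ext u v
    rw [hsymm.eq, Matrix.neg_apply, CharTwo.neg_eq]
  obtain ⟨X, Z, hXZ⟩ := exists_linearMap_dotProduct_sub_eq hskew hdiag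
  let φ := (Fintype.equivFin V).symm
  refine ⟨LinearMap.pi (Sum.elim (fun i => LinearMap.proj (φ i) ∘ₗ X)
    fun i => LinearMap.proj (φ i) ∘ₗ Z), fun u v => ?_⟩
  rw [← hXZ u v, CharTwo.sub_eq_add, dotProduct, dotProduct, ← Finset.sum_add_distrib,
    ← φ.sum_comp]
  rfl

end SymplecticRealization

section Correspondence

variable {V E : Type*} [LinearOrder V] [Fintype E] {edge : E → Finset V}

theorem exists_magicGram_of_isPauliMagicAssignment (heven : ∀ v, Even #{e | v ∈ edge e})
    {le : List E} (hnd : le.Nodup) (hmem : ∀ e, e ∈ le) {k : ℕ}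
    {α : V → Matrix (Fin k → Fin 2) (Fin k → Fin 2) ℂ} (hα : IsPauliMagicAssignment k edge α) :
    ∃ M, MagicGram edge le M ∧ (∀ u v, α u = α v → M u = M v) ∧ ∀ v, α v = 1 → M v = 0 := by
  obtain ⟨hobs, hcomm, hprod, hodd⟩ := hα
  have hsq (v : V) : α v * α v = 1 := (hobs v).mul_self
  have hunit (v : V) : IsUnit (α v) := .of_mul_eq_one _ (hsq v)
  obtain ⟨M, hM⟩ := exists_hasGram_of_isPauliObservable hobs
  refine ⟨M, ⟨hM.isValidGram hunit hcomm hprod, ?_⟩, fun u v huv => ?_, fun v hv => ?_⟩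
  · rw [← hM.natCast_card_edgeProd_eq_neg_one hsq heven hprod hnd hmem]
    exact ZMod.natCast_eq_one_iff_odd.mpr hodd
  · exact funext fun w => hM.apply_eq_apply hunit (by rw [huv])
  · exact funext fun w => (hM.eq_zero_iff_commute hunit v w).mpr (hv ▸ .one_left _)

theorem exists_isPauliMagicAssignment_of_magicGram [Fintype V]
    (heven : ∀ v, Even #{e | v ∈ edge e}) {le : List E} (hnd : le.Nodup) (hmem : ∀ e, e ∈ le)
    {M : Matrix V V (ZMod 2)} (hM : MagicGram edge le M) :
    ∃ α, IsPauliMagicAssignment (Fintype.card V) edge α ∧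
      (∀ u v, M u = M v → α u = α v) ∧ ∀ v, M v = 0 → α v = 1 := by
  obtain ⟨⟨hsymm, hdiag, hzero, hsum⟩, hinv⟩ := hM
  obtain ⟨Φ, hΦ⟩ := exists_linearMap_sympl_eq hsymm hdiag
  let α (v : V) := pauliOp (Fintype.card V) (Φ (M.row v))
  have hgram : HasGram α M := fun u v => hΦ u v ▸ pauliOp_mul_comm _ _
  have hsq (v : V) : α v * α v = 1 := pauliOp_mul_self _
  have hunit (v : V) : IsUnit (α v) := .of_mul_eq_one _ (hsq v)
  have hcomm (e : E) (u) (hu : u ∈ edge e) (v) (hv : v ∈ edge e) : Commute (α u) (α v) :=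
    (hgram.eq_zero_iff_commute hunit u v).mp (hzero e u hu v hv)
  have hprod (e : E) : edgeProd α (edge e) = 1 ∨ edgeProd α (edge e) = -1 := by
    obtain ⟨c, hc⟩ := exists_edgeProd_pauliOp_eq_smul (fun v => Φ (M.row v)) (edge e)
    have hrows : ∑ u ∈ edge e, M.row u = 0 := funext fun v => by
      rw [Finset.sum_apply]
      exact hsum e v
    rw [← map_sum, hrows, map_zero, pauliOp_zero] at hc
    exact edgeProd_eq_one_or_neg_one (fun v _ => hsq v) (hcomm e) hc
  have hodd : Odd (Nat.card {e // edgeProd α (edge e) = -1}) := by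
    rw [← ZMod.natCast_eq_one_iff_odd,
      hgram.natCast_card_edgeProd_eq_neg_one hsq heven hprod hnd hmem, hinv]
  have hobs (v : V) : IsPauliObservable (α v) :=
    isPauliObservable_iff.mpr ⟨1, Φ (M.row v), (one_smul _ _).symm⟩
  refine ⟨α, ⟨hobs, hcomm, hprod, hodd⟩, fun u v huv => ?_, fun v hv => ?_⟩
  · exact congrArg (fun row => pauliOp _ (Φ row)) huv
  · have hrow : M.row v = 0 := hv
    simp only [α, hrow, map_zero, pauliOp_zero]

end Correspondence

theorem stmt5_general {V E : Type*} [Finite V] [LinearOrder V] [Fintype E]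
    (edge : E → Finset V) (heven : ∀ v, Even #{e | v ∈ edge e})
    (le : List E) (hnd : le.Nodup) (hmem : ∀ e : E, e ∈ le) :
    (∀ k : ℕ, 1 ≤ k → ∀ α : V → Matrix (Fin k → Fin 2) (Fin k → Fin 2) ℂ,
        IsPauliMagicAssignment k edge α →
          (∀ u v : V, u ≠ v → α u ≠ α v) ∧ (∀ v : V, α v ≠ 1)) ↔
      (∀ M : Matrix V V (ZMod 2), MagicGram edge le M →
          (∀ u : V, M u ≠ 0) ∧ (∀ u v : V, M u = M v → u = v)) := by
  have := Fintype.ofFinite V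
  constructor
  · intro hmin M hM
    obtain ⟨α, hα, hrow, hzero⟩ := exists_isPauliMagicAssignment_of_magicGram heven hnd hmem hM
    have hminα (w : V) := hmin _ (Fintype.card_pos_iff.mpr ⟨w⟩) α hα
    exact ⟨fun u hu => (hminα u).2 u (hzero u hu), fun u v huv =>
      of_not_not fun hne => (hminα u).1 u v hne (hrow u v huv)⟩
  · intro hred k _ α hα
    obtain ⟨M, hM, hrow, hzero⟩ := exists_magicGram_of_isPauliMagicAssignment heven hnd hmem hα
    obtain ⟨hne_zero, hinj⟩ := hred M hM
    exact ⟨fun u v hne huv => hne (hinj u v (hrow u v huv)), fun v hv =>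
      hne_zero v (hzero v hv)⟩

/-- A proper Eulerian hypergraph is minimal (no Pauli-based magic assignment
repeats an observable or uses the identity) iff every magic Gram matrix in its valid Gram space
is reduced (no zero row, no two identical rows). -/
theorem stmt5 {V E : Type*} [Fintype V] [LinearOrder V] [Fintype E]
    (edge : E → Finset V) (hH : ProperEulerian edge)
    (le : List E) (hnd : le.Nodup) (hmem : ∀ e : E, e ∈ le) :
    (∀ k : ℕ, 1 ≤ k → ∀ α : V → Matrix (Fin k → Fin 2) (Fin k → Fin 2) ℂ,
        IsPauliMagicAssignment k edge α →
          (∀ u v : V, u ≠ v → α u ≠ α v) ∧ (∀ v : V, α v ≠ 1)) ↔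
      (∀ M : Matrix V V (ZMod 2), MagicGram edge le M →
          (∀ u : V, M u ≠ 0) ∧ (∀ u v : V, M u = M v → u = v)) :=
  stmt5_general edge hH.1 le hnd hmem
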